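/- arXiv:1604.04376 — 3 statements merged into one kernel-verified Lean document; each statement's English description precedes it below -/
import Mathlib

section
/- Each of the three operators X_s = y ∂_q + i x q, E = x ∂_x + y ∂_y + 1/2 and D_s = i q ∂_y − ∂_x ∂_q commutes with each of the three operators X = −y ∂_x − (i/2) q², H = −x ∂_x + y ∂_y + q ∂_q + 1/2, Y = −x ∂_y − (i/2) ∂_q² (nine vanishing commutators; in particular the symplectic Dirac operator D_s is mp(2,ℝ)-equivariant). -/
open MvPolynomial Complex

noncomputable section

/-- The space of complex polynomials in three variables `x = X 0`, `y = X 1`, `q = X 2`. -/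
abbrev V : Type := MvPolynomial (Fin 3) ℂ

/-- Partial derivative `∂_x`. -/
def Dx : Module.End ℂ V := (pderiv (0 : Fin 3)).toLinearMap
/-- Partial derivative `∂_y`. -/
def Dy : Module.End ℂ V := (pderiv (1 : Fin 3)).toLinearMap
/-- Partial derivative `∂_q`. -/
def Dq : Module.End ℂ V := (pderiv (2 : Fin 3)).toLinearMap
/-- Multiplication by `x`. -/
def Mx : Module.End ℂ V := LinearMap.mulLeft ℂ (X 0)
/-- Multiplication by `y`. -/
def My : Module.End ℂ V := LinearMap.mulLeft ℂ (X 1)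
/-- Multiplication by `q`. -/
def Mq : Module.End ℂ V := LinearMap.mulLeft ℂ (X 2)

/-- `X = -y ∂_x - (i/2) q²`. -/
def opX : Module.End ℂ V := -(My * Dx) - (I / 2) • (Mq * Mq)
/-- `H = -x ∂_x + y ∂_y + q ∂_q + 1/2`. -/
def opH : Module.End ℂ V := -(Mx * Dx) + My * Dy + Mq * Dq + (1 / 2 : ℂ) • 1
/-- `Y = -x ∂_y - (i/2) ∂_q²`. -/
def opY : Module.End ℂ V := -(Mx * Dy) - (I / 2) • (Dq * Dq)
/-- `E = x ∂_x + y ∂_y + 1/2`. -/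
def opE : Module.End ℂ V := Mx * Dx + My * Dy + (1 / 2 : ℂ) • 1
/-- The symplectic Dirac operator `D_s = i q ∂_y - ∂_x ∂_q`. -/
def Ds : Module.End ℂ V := I • (Mq * Dy) - Dx * Dq
/-- `X_s = y ∂_q + i x q`. -/
def Xs : Module.End ℂ V := My * Dq + I • (Mx * Mq)
/-- `O1 = x² ∂_x + x y ∂_y - (1/2) x q ∂_q + (i/2) y ∂_q² + (1/2) x`. -/
def opO1 : Module.End ℂ V :=
  Mx * Mx * Dx + Mx * My * Dy - (1 / 2 : ℂ) • (Mx * Mq * Dq) + (I / 2) • (My * Dq * Dq)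
    + (1 / 2 : ℂ) • Mx
/-- `O2 = x y ∂_x + y² ∂_y + (1/2) y q ∂_q + (i/2) x q² + y`. -/
def opO2 : Module.End ℂ V :=
  Mx * My * Dx + My * My * Dy + (1 / 2 : ℂ) • (My * Mq * Dq) + (I / 2) • (Mx * Mq * Mq) + My

/-
In the Weyl algebra `[X, Y] = H` and `[X_s, D_s] = i (E + 1/2)`, so by the Jacobi identity all nine
commutators vanish as soon as `X_s` and `D_s` commute with `X` and `Y`. Two symmetries of the
canonical commutation relations reduce these four commutators to `[X_s, X] = 0`: the Fourier
transform in `(x, y)` followed by a quarter turn fixes `X` and `Y` and sends `X_s` to `-D_s`, and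
the Fourier transform in `q` combined with the exchange of `x` and `y` sends `X` to `Y` and `X_s`
to `i X_s`.
-/

attribute [local instance] LieRing.ofAssociativeRing

section AssociativeRing

variable {A : Type*} [NonUnitalRing A]

theorem lie_mul (a b c : A) : ⁅a, b * c⁆ = ⁅a, b⁆ * c + b * ⁅a, c⁆ := by
  simp only [Ring.lie_def, mul_sub, sub_mul, mul_assoc, sub_add_sub_cancel]

theorem mul_lie (a b c : A) : ⁅a * b, c⁆ = a * ⁅b, c⁆ + ⁅a, c⁆ * b := by
  simp only [Ring.lie_def, mul_sub, sub_mul, mul_assoc, sub_add_sub_cancel]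

end AssociativeRing

/-- The canonical commutation relations `[x i, x j] = [d i, d j] = 0`, `[d i, x j] = δ i j` between
abstract coordinates `x` and derivatives `d` in a ring. -/
structure IsWeylFamily {ι A : Type*} [DecidableEq ι] [Ring A] (x d : ι → A) : Prop where
  lie_coord_coord (i j : ι) : ⁅x i, x j⁆ = 0
  lie_deriv_deriv (i j : ι) : ⁅d i, d j⁆ = 0
  lie_deriv_coord (i j : ι) : ⁅d i, x j⁆ = if i = j then 1 else 0

namespace IsWeylFamily

variable {ι A : Type*} [DecidableEq ι] [Ring A] {x d : ι → A}

theorem lie_coord_deriv (h : IsWeylFamily x d) (i j : ι) :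
    ⁅x i, d j⁆ = if i = j then -1 else 0 := by
  rw [← lie_skew, h.lie_deriv_coord, apply_ite Neg.neg, neg_zero]
  simp only [eq_comm]

theorem commute_coord (h : IsWeylFamily x d) (i j : ι) : Commute (x i) (x j) :=
  commute_iff_lie_eq.mpr (h.lie_coord_coord i j)

theorem commute_deriv_coord (h : IsWeylFamily x d) {i j : ι} (hij : i ≠ j) :
    Commute (d i) (x j) :=
  commute_iff_lie_eq.mpr ((h.lie_deriv_coord i j).trans (if_neg hij))

theorem deriv_mul_coord_self (h : IsWeylFamily x d) (i : ι) : d i * x i = x i * d i + 1 := by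
  rw [← sub_eq_iff_eq_add', ← Ring.lie_def, h.lie_deriv_coord, if_pos rfl]

end IsWeylFamily

section PolynomialRing

theorem lie_mulLeft_mulLeft {R A : Type*} [CommSemiring R] [CommRing A] [Algebra R A] (a b : A) :
    ⁅LinearMap.mulLeft R a, LinearMap.mulLeft R b⁆ = 0 := by
  ext c
  simp [Ring.lie_def, mul_left_comm a b c]

theorem lie_derivation_mulLeft {R A : Type*} [CommSemiring R] [CommRing A] [Algebra R A]
    (D : Derivation R A A) (a : A) :
    ⁅D.toLinearMap, LinearMap.mulLeft R a⁆ = LinearMap.mulLeft R (D a) := by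
  ext b
  simp [Ring.lie_def, mul_comm b]

variable {R σ : Type*} [CommRing R]

theorem lie_pderiv_pderiv (i j : σ) :
    ⁅(pderiv i : Derivation R (MvPolynomial σ R) (MvPolynomial σ R)),
      (pderiv j : Derivation R (MvPolynomial σ R) (MvPolynomial σ R))⁆ = 0 := by
  classical
  refine derivation_ext fun k => ?_
  rw [Derivation.commutator_apply]
  simp [pderiv_X, Pi.single_apply, apply_ite]

theorem isWeylFamily_mulLeft_X_pderiv [DecidableEq σ] :
    IsWeylFamily (fun i : σ => LinearMap.mulLeft R (X i : MvPolynomial σ R))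
      (fun i => (pderiv i).toLinearMap) where
  lie_coord_coord i j := lie_mulLeft_mulLeft (X i) (X j)
  lie_deriv_deriv i j := congrArg Derivation.toLinearMap (lie_pderiv_pderiv i j)
  lie_deriv_coord i j := by
    rw [lie_derivation_mulLeft]
    obtain rfl | hij := eq_or_ne i j
    · rw [pderiv_X_self, LinearMap.mulLeft_one, if_pos rfl, Module.End.one_eq_id]
    · rw [pderiv_X_of_ne hij.symm, LinearMap.mulLeft_zero_eq_zero, if_neg hij]

end PolynomialRing

section Symmetries

variable {A : Type*} [Ring A] {x d : Fin 3 → A}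

theorem IsWeylFamily.planeFourier (h : IsWeylFamily x d) :
    IsWeylFamily ![-d 1, d 0, x 2] ![x 1, -x 0, d 2] where
  lie_coord_coord i j := by
    fin_cases i <;> fin_cases j <;>
      simp [h.lie_deriv_deriv, h.lie_deriv_coord, h.lie_coord_deriv]
  lie_deriv_deriv i j := by
    fin_cases i <;> fin_cases j <;>
      simp [h.lie_coord_coord, h.lie_deriv_coord, h.lie_coord_deriv]
  lie_deriv_coord i j := by
    fin_cases i <;> fin_cases j <;>
      simp [h.lie_coord_coord, h.lie_deriv_deriv, h.lie_deriv_coord, h.lie_coord_deriv]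

theorem IsWeylFamily.swapFourier (h : IsWeylFamily x d) :
    IsWeylFamily ![x 1, x 0, d 2] ![d 1, d 0, -x 2] where
  lie_coord_coord i j := by
    fin_cases i <;> fin_cases j <;>
      simp [h.lie_coord_coord, h.lie_deriv_coord, h.lie_coord_deriv]
  lie_deriv_deriv i j := by
    fin_cases i <;> fin_cases j <;>
      simp [h.lie_deriv_deriv, h.lie_deriv_coord, h.lie_coord_deriv]
  lie_deriv_coord i j := by
    fin_cases i <;> fin_cases j <;>
      simp [h.lie_coord_coord, h.lie_deriv_deriv, h.lie_deriv_coord, h.lie_coord_deriv]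

end Symmetries

section HoweDuality

variable {A : Type*} [Ring A] [Algebra ℂ A]

/-- The operator `X` in the abstract coordinates `(x, y, q) = (x 0, x 1, x 2)` and derivatives
`(∂_x, ∂_y, ∂_q) = (d 0, d 1, d 2)`, as for the five operators below. -/
def weylX (x d : Fin 3 → A) : A := -(x 1 * d 0) - (I / 2) • (x 2 * x 2)

/-- The middle operator `H = [X, Y]` of the triple `X, H, Y`. -/
def weylH (x d : Fin 3 → A) : A := -(x 0 * d 0) + x 1 * d 1 + x 2 * d 2 + (1 / 2 : ℂ) • 1

/-- The operator `Y`, the counterpart of `X` under the Fourier transform in `q` and the exchange of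
`x` and `y`. -/
def weylY (x d : Fin 3 → A) : A := -(x 0 * d 1) - (I / 2) • (d 2 * d 2)

/-- The Euler operator `E` of the plane `(x, y)`, shifted by `1/2`. -/
def weylE (x d : Fin 3 → A) : A := x 0 * d 0 + x 1 * d 1 + (1 / 2 : ℂ) • 1

/-- The symplectic Dirac operator `D_s`. -/
def weylDs (x d : Fin 3 → A) : A := I • (x 2 * d 1) - d 0 * d 2

/-- The operator `X_s`, the partner of `D_s`, with `[X_s, D_s] = i (E + 1/2)`. -/
def weylXs (x d : Fin 3 → A) : A := x 1 * d 2 + I • (x 0 * x 2)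

namespace IsWeylFamily

variable {x d : Fin 3 → A}

theorem lie_weylX_weylY (h : IsWeylFamily x d) : ⁅weylX x d, weylY x d⁆ = weylH x d := by
  have lie_yDx_xDy : ⁅x 1 * d 0, x 0 * d 1⁆ = x 1 * d 1 - x 0 * d 0 := by
    simp [lie_mul, mul_lie, h.lie_coord_coord, h.lie_deriv_deriv, h.lie_deriv_coord,
      h.lie_coord_deriv, sub_eq_add_neg, add_comm]
  have lie_yDx_DqDq : ⁅x 1 * d 0, d 2 * d 2⁆ = 0 := by
    simp [lie_mul, mul_lie, h.lie_coord_deriv, h.lie_deriv_deriv]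
  have lie_qq_xDy : ⁅x 2 * x 2, x 0 * d 1⁆ = 0 := by
    simp [lie_mul, mul_lie, h.lie_coord_deriv, h.lie_coord_coord]
  have lie_qq_DqDq : ⁅x 2 * x 2, d 2 * d 2⁆ = -(4 : ℂ) • (x 2 * d 2) - (2 : ℂ) • 1 := by
    simp only [lie_mul, mul_lie, h.lie_coord_deriv, ↓reduceIte, mul_neg, neg_mul, mul_one, one_mul,
      add_mul, mul_add, h.deriv_mul_coord_self]
    module
  simp only [weylX, weylY, weylH, sub_lie, lie_sub, neg_lie, lie_neg, smul_lie, lie_smul,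
    lie_yDx_xDy, lie_yDx_DqDq, lie_qq_xDy, lie_qq_DqDq]
  linear_combination (norm := module) (-I_sq) • (x 2 * d 2 + (1 / 2 : ℂ) • (1 : A))

theorem lie_weylXs_weylDs (h : IsWeylFamily x d) :
    ⁅weylXs x d, weylDs x d⁆ = I • (weylE x d + (1 / 2 : ℂ) • 1) := by
  have lie_yDq_qDy : ⁅x 1 * d 2, x 2 * d 1⁆ = x 1 * d 1 - x 2 * d 2 := by
    simp [lie_mul, mul_lie, h.lie_coord_coord, h.lie_deriv_deriv, h.lie_deriv_coord,
      h.lie_coord_deriv, sub_eq_add_neg, add_comm]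
  have lie_yDq_DxDq : ⁅x 1 * d 2, d 0 * d 2⁆ = 0 := by
    simp [lie_mul, mul_lie, h.lie_coord_deriv, h.lie_deriv_deriv]
  have lie_xq_qDy : ⁅x 0 * x 2, x 2 * d 1⁆ = 0 := by
    simp [lie_mul, mul_lie, h.lie_coord_deriv, h.lie_coord_coord]
  have lie_xq_DxDq : ⁅x 0 * x 2, d 0 * d 2⁆ = -(x 0 * d 0) - x 2 * d 2 - 1 := by
    simp only [lie_mul, mul_lie, h.lie_coord_deriv, h.deriv_mul_coord_self, Fin.reduceEq,
      ↓reduceIte, mul_zero, zero_mul, add_zero, zero_add, mul_neg, neg_mul, mul_one, one_mul]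
    abel
  simp only [weylXs, weylDs, weylE, add_lie, lie_sub, smul_lie, lie_smul, lie_yDq_qDy, lie_yDq_DxDq,
    lie_xq_qDy, lie_xq_DxDq]
  module

theorem lie_weylXs_weylX (h : IsWeylFamily x d) : ⁅weylXs x d, weylX x d⁆ = 0 := by
  have lie_yDq_yDx : ⁅x 1 * d 2, x 1 * d 0⁆ = 0 := by
    simp [lie_mul, mul_lie, h.lie_deriv_deriv, h.lie_deriv_coord, h.lie_coord_deriv]
  have lie_yDq_qq : ⁅x 1 * d 2, x 2 * x 2⁆ = (2 : ℂ) • (x 1 * x 2) := by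
    simp [lie_mul, mul_lie, h.lie_coord_coord, h.lie_deriv_coord, (h.commute_coord 2 1).eq,
      two_smul]
  have lie_xq_yDx : ⁅x 0 * x 2, x 1 * d 0⁆ = -(x 1 * x 2) := by
    simp [lie_mul, mul_lie, h.lie_coord_coord, h.lie_coord_deriv]
  have lie_xq_qq : ⁅x 0 * x 2, x 2 * x 2⁆ = 0 := by
    simp [lie_mul, mul_lie, h.lie_coord_coord]
  simp only [weylXs, weylX, add_lie, lie_sub, lie_neg, smul_lie, lie_smul, lie_yDq_yDx, lie_yDq_qq,
    lie_xq_yDx, lie_xq_qq]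
  module

theorem weylX_planeFourier (h : IsWeylFamily x d) :
    weylX ![-d 1, d 0, x 2] ![x 1, -x 0, d 2] = weylX x d := by
  simp [weylX, (h.commute_deriv_coord (zero_ne_one (α := Fin 3))).eq]

theorem weylY_planeFourier (h : IsWeylFamily x d) :
    weylY ![-d 1, d 0, x 2] ![x 1, -x 0, d 2] = weylY x d := by
  simp [weylY, (h.commute_deriv_coord (one_ne_zero (α := Fin 3))).eq]

theorem weylXs_planeFourier (h : IsWeylFamily x d) :
    weylXs ![-d 1, d 0, x 2] ![x 1, -x 0, d 2] = -weylDs x d := by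
  simp [weylXs, weylDs, (h.commute_deriv_coord (show 1 ≠ 2 by decide)).eq, sub_eq_add_neg]

theorem weylX_swapFourier : weylX ![x 1, x 0, d 2] ![d 1, d 0, -x 2] = weylY x d := by
  simp [weylX, weylY]

theorem weylXs_swapFourier :
    weylXs ![x 1, x 0, d 2] ![d 1, d 0, -x 2] = I • weylXs x d := by
  simp [weylXs, smul_smul, add_comm]

theorem lie_weylXs_weylY (h : IsWeylFamily x d) : ⁅weylXs x d, weylY x d⁆ = 0 := by
  have lie_transformed := h.swapFourier.lie_weylXs_weylX
  rwa [weylXs_swapFourier, weylX_swapFourier, smul_lie,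
    smul_eq_zero_iff_right I_ne_zero] at lie_transformed

theorem lie_weylDs_weylX (h : IsWeylFamily x d) : ⁅weylDs x d, weylX x d⁆ = 0 := by
  have lie_transformed := h.planeFourier.lie_weylXs_weylX
  rwa [h.weylXs_planeFourier, h.weylX_planeFourier, neg_lie, neg_eq_zero] at lie_transformed

theorem lie_weylDs_weylY (h : IsWeylFamily x d) : ⁅weylDs x d, weylY x d⁆ = 0 := by
  have lie_transformed := h.planeFourier.lie_weylXs_weylY
  rwa [h.weylXs_planeFourier, h.weylY_planeFourier, neg_lie, neg_eq_zero] at lie_transformed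

theorem lie_weylH_eq_zero (h : IsWeylFamily x d) {a : A} (hX : ⁅a, weylX x d⁆ = 0)
    (hY : ⁅a, weylY x d⁆ = 0) : ⁅a, weylH x d⁆ = 0 := by
  rw [← h.lie_weylX_weylY, leibniz_lie, hX, hY, zero_lie, lie_zero, add_zero]

theorem weylE_eq_smul_lie_sub (h : IsWeylFamily x d) :
    weylE x d = -I • ⁅weylXs x d, weylDs x d⁆ - (1 / 2 : ℂ) • 1 := by
  rw [h.lie_weylXs_weylDs, smul_smul, neg_mul, I_mul_I, neg_neg, one_smul, add_sub_cancel_right]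

theorem weylE_lie_eq_zero (h : IsWeylFamily x d) {a : A} (hXs : ⁅weylXs x d, a⁆ = 0)
    (hDs : ⁅weylDs x d, a⁆ = 0) : ⁅weylE x d, a⁆ = 0 := by
  rw [h.weylE_eq_smul_lie_sub, sub_lie, smul_lie, smul_lie, lie_lie, hXs, hDs,
    (Commute.one_left a).lie_eq]
  simp only [lie_zero, sub_zero, smul_zero]

end IsWeylFamily

end HoweDuality

theorem mp2_equivariance_general {A : Type*} [Ring A] [Algebra ℂ A] {x d : Fin 3 → A}
    (h : IsWeylFamily x d) :
    Commute (weylXs x d) (weylX x d) ∧ Commute (weylXs x d) (weylH x d) ∧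
    Commute (weylXs x d) (weylY x d) ∧ Commute (weylE x d) (weylX x d) ∧
    Commute (weylE x d) (weylH x d) ∧ Commute (weylE x d) (weylY x d) ∧
    Commute (weylDs x d) (weylX x d) ∧ Commute (weylDs x d) (weylH x d) ∧
    Commute (weylDs x d) (weylY x d) := by
  have lie_Xs_H := h.lie_weylH_eq_zero h.lie_weylXs_weylX h.lie_weylXs_weylY
  have lie_Ds_H := h.lie_weylH_eq_zero h.lie_weylDs_weylX h.lie_weylDs_weylY
  simp only [commute_iff_lie_eq]
  exact ⟨h.lie_weylXs_weylX, lie_Xs_H, h.lie_weylXs_weylY,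
    h.weylE_lie_eq_zero h.lie_weylXs_weylX h.lie_weylDs_weylX,
    h.weylE_lie_eq_zero lie_Xs_H lie_Ds_H,
    h.weylE_lie_eq_zero h.lie_weylXs_weylY h.lie_weylDs_weylY,
    h.lie_weylDs_weylX, lie_Ds_H, h.lie_weylDs_weylY⟩

section PolynomialOperators

theorem isWeylFamily_Mx_My_Mq : IsWeylFamily ![Mx, My, Mq] ![Dx, Dy, Dq] := by
  convert isWeylFamily_mulLeft_X_pderiv (R := ℂ) (σ := Fin 3) using 1 <;>
    (ext i : 1; fin_cases i <;> rfl)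

theorem weylX_eq_opX : weylX ![Mx, My, Mq] ![Dx, Dy, Dq] = opX := rfl

theorem weylH_eq_opH : weylH ![Mx, My, Mq] ![Dx, Dy, Dq] = opH := rfl

theorem weylY_eq_opY : weylY ![Mx, My, Mq] ![Dx, Dy, Dq] = opY := rfl

theorem weylE_eq_opE : weylE ![Mx, My, Mq] ![Dx, Dy, Dq] = opE := rfl

theorem weylDs_eq_Ds : weylDs ![Mx, My, Mq] ![Dx, Dy, Dq] = Ds := rfl

theorem weylXs_eq_Xs : weylXs ![Mx, My, Mq] ![Dx, Dy, Dq] = Xs := rfl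

end PolynomialOperators

/-- Each of `X_s`, `E`, `D_s` commutes with each of `X`, `H`, `Y`; in particular the
symplectic Dirac operator `D_s` is `mp(2,ℝ)`-equivariant. -/
theorem mp2_equivariance :
    Xs * opX - opX * Xs = 0 ∧ Xs * opH - opH * Xs = 0 ∧ Xs * opY - opY * Xs = 0 ∧
    opE * opX - opX * opE = 0 ∧ opE * opH - opH * opE = 0 ∧ opE * opY - opY * opE = 0 ∧
    Ds * opX - opX * Ds = 0 ∧ Ds * opH - opH * Ds = 0 ∧ Ds * opY - opY * Ds = 0 := by
  simpa only [commute_iff_eq, sub_eq_zero, weylX_eq_opX, weylH_eq_opH, weylY_eq_opY, weylE_eq_opE,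
    weylDs_eq_Ds, weylXs_eq_Xs] using mp2_equivariance_general isWeylFamily_Mx_My_Mq
end
end

section
/- With O1 = x² ∂_x + x y ∂_y − (1/2) x q ∂_q + (i/2) y ∂_q² + (1/2) x and D_s = i q ∂_y − ∂_x ∂_q, one has the operator identity [D_s, O1] = (3/2) x ∘ D_s (composition of multiplication by (3/2)x with D_s); equivalently D_s ∘ O1 = (O1 + (3/2) x) ∘ D_s. In particular O1 preserves the kernel of D_s. -/
open MvPolynomial Complex

noncomputable section

/-! `O1` is assembled from simpler operators, `O1 = x E + (i/2) X_s ∂_q`, and each of `x`, `E`,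
`X_s`, `∂_q` has a short commutation relation with `D_s`. Collecting them gives
`[D_s, O1] = x D_s + (1/2) (X_s ∂_y - (E - 1/2) ∂_q)`, and the operator in parentheses is once
more `x D_s`. -/

section Pderiv

variable {R σ : Type*} [CommSemiring R]

theorem pderiv_X_mul_self (i : σ) (p : MvPolynomial σ R) :
    pderiv i (X i * p) = X i * pderiv i p + p := by
  rw [pderiv_mul, pderiv_X_self, one_mul, add_comm]

theorem pderiv_X_mul_of_ne {i j : σ} (h : j ≠ i) (p : MvPolynomial σ R) :
    pderiv i (X j * p) = X j * pderiv i p := by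
  rw [pderiv_mul, pderiv_X_of_ne h, zero_mul, zero_add]

theorem pderiv_pderiv_comm (i j : σ) (p : MvPolynomial σ R) :
    pderiv i (pderiv j p) = pderiv j (pderiv i p) := by
  classical
  induction p using MvPolynomial.induction_on with
  | C a => simp
  | add p q hp hq => simp only [map_add, hp, hq]
  | mul_X p k hp =>
    have pderiv_pderiv_X (i j : σ) : pderiv i (pderiv j (X k : MvPolynomial σ R)) = 0 := by
      rw [pderiv_X, Pi.single_apply]
      split_ifs <;> simp
    simp only [pderiv_mul, map_add, hp, pderiv_pderiv_X]
    ring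

end Pderiv

theorem Mx_apply (p : V) : Mx p = X 0 * p := rfl

theorem Dy_apply (p : V) : Dy p = pderiv 1 p := rfl

theorem Dq_apply (p : V) : Dq p = pderiv 2 p := rfl

theorem Ds_apply (p : V) : Ds p = C I * (X 2 * pderiv 1 p) - pderiv 0 (pderiv 2 p) := by
  rw [← smul_eq_C_mul]
  rfl

theorem opE_apply (p : V) :
    opE p = X 0 * pderiv 0 p + X 1 * pderiv 1 p + C (1 / 2) * p := by
  rw [← smul_eq_C_mul]
  rfl

theorem Xs_apply (p : V) : Xs p = X 1 * pderiv 2 p + C I * (X 0 * (X 2 * p)) := by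
  rw [← smul_eq_C_mul]
  rfl

theorem Ds_mul_Mx : Ds * Mx = Mx * Ds - Dq := by
  refine LinearMap.ext fun p => ?_
  simp only [Module.End.mul_apply, LinearMap.sub_apply, Ds_apply, Mx_apply, Dq_apply,
    pderiv_X_mul_self, pderiv_X_mul_of_ne, ne_eq, Fin.isValue, Fin.reduceEq, not_false_eq_true]
  ring

theorem Ds_mul_Dq : Ds * Dq = Dq * Ds - I • Dy := by
  refine LinearMap.ext fun p => ?_
  simp only [Module.End.mul_apply, LinearMap.sub_apply, LinearMap.smul_apply, smul_eq_C_mul,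
    Ds_apply, Dq_apply, Dy_apply, map_sub, pderiv_C_mul, pderiv_X_mul_self,
    pderiv_pderiv_comm (2 : Fin 3)]
  ring

theorem Ds_mul_opE : Ds * opE = opE * Ds + Ds := by
  refine LinearMap.ext fun p => ?_
  simp only [Module.End.mul_apply, LinearMap.add_apply, Ds_apply, opE_apply, map_add, map_sub,
    pderiv_C_mul, pderiv_X_mul_self, pderiv_X_mul_of_ne, ne_eq, Fin.isValue, Fin.reduceEq,
    not_false_eq_true, pderiv_pderiv_comm (2 : Fin 3), pderiv_pderiv_comm (1 : Fin 3) 0]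
  ring

theorem Ds_mul_Xs : Ds * Xs = Xs * Ds - I • (opE + (1 / 2 : ℂ) • 1) := by
  have half_add_half : (C (1 / 2) + C (1 / 2) : V) = 1 := by rw [← C_add, add_halves, C_1]
  refine LinearMap.ext fun p => ?_
  simp only [Module.End.mul_apply, Module.End.one_apply, LinearMap.add_apply, LinearMap.sub_apply,
    LinearMap.smul_apply, smul_eq_C_mul, Ds_apply, Xs_apply, opE_apply, map_add, map_sub,
    pderiv_C_mul, pderiv_X_mul_self, pderiv_X_mul_of_ne, ne_eq, Fin.isValue, Fin.reduceEq,
    not_false_eq_true, pderiv_pderiv_comm (2 : Fin 3)]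
  linear_combination (C I * p) * half_add_half

theorem opE_mul_Dq : opE * Dq = Dq * opE := by
  refine LinearMap.ext fun p => ?_
  simp only [Module.End.mul_apply, opE_apply, Dq_apply, map_add, pderiv_C_mul, pderiv_X_mul_of_ne,
    ne_eq, Fin.isValue, Fin.reduceEq, not_false_eq_true, pderiv_pderiv_comm (2 : Fin 3)]

theorem Xs_mul_Dy : Xs * Dy = Mx * Ds + (opE - (1 / 2 : ℂ) • 1) * Dq := by
  refine LinearMap.ext fun p => ?_
  simp only [Module.End.mul_apply, Module.End.one_apply, LinearMap.add_apply, LinearMap.sub_apply,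
    LinearMap.smul_apply, smul_eq_C_mul, Ds_apply, Xs_apply, opE_apply, Mx_apply, Dq_apply,
    Dy_apply, pderiv_pderiv_comm (2 : Fin 3)]
  ring

theorem I_div_two_mul_I : I / 2 * I = -(1 / 2) := by
  rw [div_mul_eq_mul_div, I_mul_I, neg_div]

theorem opO1_eq : opO1 = Mx * opE + (I / 2) • (Xs * Dq) := by
  simp only [opO1, opE, Xs, mul_add, add_mul, smul_add, smul_mul_assoc, mul_smul_comm, smul_smul,
    I_div_two_mul_I, mul_one, mul_assoc]
  module

theorem Ds_mul_opO1 : Ds * opO1 = opO1 * Ds + (3 / 2 : ℂ) • (Mx * Ds) := by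
  have Ds_mul_Mx_opE : Ds * (Mx * opE) = Mx * opE * Ds + Mx * Ds - Dq * opE := by
    rw [← mul_assoc, Ds_mul_Mx, sub_mul, mul_assoc, Ds_mul_opE, mul_add, ← mul_assoc]
  have Ds_mul_Xs_Dq : Ds * (Xs * Dq) =
      Xs * Dq * Ds - I • (Xs * Dy) - I • ((opE + (1 / 2 : ℂ) • 1) * Dq) := by
    rw [← mul_assoc, Ds_mul_Xs, sub_mul, mul_assoc, Ds_mul_Dq, mul_sub, ← mul_assoc,
      mul_smul_comm, smul_mul_assoc]
  rw [opO1_eq, mul_add, mul_smul_comm, Ds_mul_Mx_opE, Ds_mul_Xs_Dq, Xs_mul_Dy, ← opE_mul_Dq]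
  simp only [add_mul, sub_mul, smul_add, smul_sub, smul_smul, smul_mul_assoc, one_mul,
    I_div_two_mul_I]
  module

/-- `[D_s, O1] = (3/2) x ∘ D_s`, equivalently `D_s ∘ O1 = (O1 + (3/2) x) ∘ D_s`;
in particular `O1` preserves the kernel of `D_s`. -/
theorem symmetry_O1 :
    Ds * opO1 - opO1 * Ds = (3 / 2 : ℂ) • (Mx * Ds) ∧
    Ds * opO1 = (opO1 + (3 / 2 : ℂ) • Mx) * Ds ∧
    ∀ p : V, Ds p = 0 → Ds (opO1 p) = 0 := by
  have intertwine : Ds * opO1 = (opO1 + (3 / 2 : ℂ) • Mx) * Ds := by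
    rw [Ds_mul_opO1, add_mul, smul_mul_assoc]
  refine ⟨sub_eq_iff_eq_add'.mpr Ds_mul_opO1, intertwine, fun p hp => ?_⟩
  rw [← Module.End.mul_apply, intertwine, Module.End.mul_apply, hp, map_zero]
end
end

section
/- The following commutation relations hold: [∂_x, O2] = −X, [∂_y, O1] = −Y, [∂_y, O2] = (1/2)(3E + H), and [∂_x, O1] = (1/2)(3E − H). -/
open MvPolynomial Complex

noncomputable section

/-!
Bracketing with a fixed operator is a derivation of the operator algebra, so `[∂_x, ·]` and
`[∂_y, ·]` are determined by their values on `x`, `y`, `q`, `∂_x`, `∂_y`, `∂_q`, which are the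
canonical commutation relations. Applied to `O1` and `O2` by the Leibniz rule they give normally
ordered operators (coordinates to the left of derivatives), which are then compared coefficientwise.
-/

section Commutators

attribute [local instance] LieRing.ofAssociativeRing

open LieAlgebra

-- `ad` rather than `⁅·, ·⁆`, since on `Module.End` the bracket notation resolves to the action on
-- `Hom`, where `lie_smul` does not rewrite.
theorem ad_apply_mul {R A : Type*} [CommRing R] [Ring A] [Algebra R A] (a b c : A) :
    ad R A a (b * c) = ad R A a b * c + b * ad R A a c := by
  simp only [ad_apply, LieRing.of_associative_ring_bracket]
  noncomm_ring

section PolynomialOperators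

variable {R : Type*} [CommRing R]

theorem ad_derivation_mulLeft {A : Type*} [CommRing A] [Algebra R A] (D : Derivation R A A)
    (a : A) :
    ad R (Module.End R A) D.toLinearMap (LinearMap.mulLeft R a) = LinearMap.mulLeft R (D a) := by
  ext b
  simp [LieRing.of_associative_ring_bracket, mul_comm]

variable {σ : Type*}

theorem ad_pderiv_mulLeft_X_self (i : σ) :
    ad R (Module.End R (MvPolynomial σ R)) (pderiv i).toLinearMap (LinearMap.mulLeft R (X i)) =
      1 := by
  rw [ad_derivation_mulLeft, pderiv_X_self, LinearMap.mulLeft_one, Module.End.one_eq_id]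

theorem ad_pderiv_mulLeft_X_of_ne {i j : σ} (hji : j ≠ i) :
    ad R (Module.End R (MvPolynomial σ R)) (pderiv i).toLinearMap (LinearMap.mulLeft R (X j)) =
      0 := by
  rw [ad_derivation_mulLeft, pderiv_X_of_ne hji, LinearMap.mulLeft_zero_eq_zero]

theorem ad_pderiv_pderiv (i j : σ) :
    ad R (Module.End R (MvPolynomial σ R)) (pderiv i).toLinearMap (pderiv j).toLinearMap = 0 := by
  classical
  have lie_eq_zero : ⁅pderiv (R := R) i, pderiv (R := R) j⁆ = 0 := derivation_ext fun k => by
    simp [Derivation.commutator_apply, Pi.single_apply, apply_ite]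
  exact congrArg Derivation.toLinearMap lie_eq_zero

end PolynomialOperators

theorem ad_Dx_Mx : ad ℂ (Module.End ℂ V) Dx Mx = 1 :=
  ad_pderiv_mulLeft_X_self 0

theorem ad_Dx_My : ad ℂ (Module.End ℂ V) Dx My = 0 :=
  ad_pderiv_mulLeft_X_of_ne (by decide)

theorem ad_Dx_Mq : ad ℂ (Module.End ℂ V) Dx Mq = 0 :=
  ad_pderiv_mulLeft_X_of_ne (by decide)

theorem ad_Dx_Dx : ad ℂ (Module.End ℂ V) Dx Dx = 0 :=
  ad_pderiv_pderiv 0 0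

theorem ad_Dx_Dy : ad ℂ (Module.End ℂ V) Dx Dy = 0 :=
  ad_pderiv_pderiv 0 1

theorem ad_Dx_Dq : ad ℂ (Module.End ℂ V) Dx Dq = 0 :=
  ad_pderiv_pderiv 0 2

theorem ad_Dy_Mx : ad ℂ (Module.End ℂ V) Dy Mx = 0 :=
  ad_pderiv_mulLeft_X_of_ne (by decide)

theorem ad_Dy_My : ad ℂ (Module.End ℂ V) Dy My = 1 :=
  ad_pderiv_mulLeft_X_self 1

theorem ad_Dy_Mq : ad ℂ (Module.End ℂ V) Dy Mq = 0 :=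
  ad_pderiv_mulLeft_X_of_ne (by decide)

theorem ad_Dy_Dx : ad ℂ (Module.End ℂ V) Dy Dx = 0 :=
  ad_pderiv_pderiv 1 0

theorem ad_Dy_Dy : ad ℂ (Module.End ℂ V) Dy Dy = 0 :=
  ad_pderiv_pderiv 1 1

theorem ad_Dy_Dq : ad ℂ (Module.End ℂ V) Dy Dq = 0 :=
  ad_pderiv_pderiv 1 2

theorem ad_Dx_opO2 : ad ℂ (Module.End ℂ V) Dx opO2 = -opX := by
  calc
    ad ℂ (Module.End ℂ V) Dx opO2
    _ = My * Dx + (I / 2) • (Mq * Mq) := by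
      simp only [opO2, map_add, map_smul, ad_apply_mul, ad_Dx_Mx, ad_Dx_My, ad_Dx_Mq,
        ad_Dx_Dx, ad_Dx_Dy, ad_Dx_Dq, one_mul, zero_mul, mul_zero, add_zero]
      module
    _ = -opX := by
      simp only [opX]
      module

theorem ad_Dy_opO1 : ad ℂ (Module.End ℂ V) Dy opO1 = -opY := by
  calc
    ad ℂ (Module.End ℂ V) Dy opO1
    _ = Mx * Dy + (I / 2) • (Dq * Dq) := by
      simp only [opO1, map_add, map_sub, map_smul, ad_apply_mul, ad_Dy_Mx, ad_Dy_My, ad_Dy_Mq,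
        ad_Dy_Dx, ad_Dy_Dy, ad_Dy_Dq, one_mul, mul_one, zero_mul, mul_zero, zero_add, add_zero]
      module
    _ = -opY := by
      simp only [opY]
      module

theorem ad_Dy_opO2 :
    ad ℂ (Module.End ℂ V) Dy opO2 = (1 / 2 : ℂ) • ((3 : ℂ) • opE + opH) := by
  calc
    ad ℂ (Module.End ℂ V) Dy opO2
    _ = Mx * Dx + (2 : ℂ) • (My * Dy) + (1 / 2 : ℂ) • (Mq * Dq) + 1 := by
      simp only [opO2, map_add, map_smul, ad_apply_mul, ad_Dy_Mx, ad_Dy_My, ad_Dy_Mq,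
        ad_Dy_Dx, ad_Dy_Dy, ad_Dy_Dq, one_mul, mul_one, zero_mul, mul_zero,
        zero_add, add_zero, add_mul]
      module
    _ = (1 / 2 : ℂ) • ((3 : ℂ) • opE + opH) := by
      simp only [opE, opH]
      module

theorem ad_Dx_opO1 :
    ad ℂ (Module.End ℂ V) Dx opO1 = (1 / 2 : ℂ) • ((3 : ℂ) • opE - opH) := by
  calc
    ad ℂ (Module.End ℂ V) Dx opO1
    _ = (2 : ℂ) • (Mx * Dx) + My * Dy - (1 / 2 : ℂ) • (Mq * Dq) + (1 / 2 : ℂ) • 1 := by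
      simp only [opO1, map_add, map_sub, map_smul, ad_apply_mul, ad_Dx_Mx, ad_Dx_My, ad_Dx_Mq,
        ad_Dx_Dx, ad_Dx_Dy, ad_Dx_Dq, one_mul, mul_one, zero_mul, mul_zero, add_zero, add_mul]
      module
    _ = (1 / 2 : ℂ) • ((3 : ℂ) • opE - opH) := by
      simp only [opE, opH]
      module

end Commutators

/-- `[∂_x, O2] = -X`, `[∂_y, O1] = -Y`, `[∂_y, O2] = (1/2)(3E + H)`,
`[∂_x, O1] = (1/2)(3E - H)`. -/
theorem commutators_partials_O :
    Dx * opO2 - opO2 * Dx = -opX ∧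
    Dy * opO1 - opO1 * Dy = -opY ∧
    Dy * opO2 - opO2 * Dy = (1 / 2 : ℂ) • ((3 : ℂ) • opE + opH) ∧
    Dx * opO1 - opO1 * Dx = (1 / 2 : ℂ) • ((3 : ℂ) • opE - opH) :=
  ⟨ad_Dx_opO2, ad_Dy_opO1, ad_Dy_opO2, ad_Dx_opO1⟩
end
end
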